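/- arXiv:1609.04435 — 5 statements merged into one kernel-verified Lean document; each statement's English description precedes it below -/
import Mathlib

section
/- Let ε > 0, let I ⊂ ℝ be an open interval, and let A, B : ℝ → ℝ be twice differentiable functions satisfying the Airy equation A''(x) = x·A(x) and B''(x) = x·B(x) for all x ∈ ℝ. Let k ∈ ℝ, let μ : I → ℝ be continuous, let Q : I → (0, ∞) be twice differentiable, and let η : I → ℝ be differentiable with η'(z) = ε^{−2/3} Q(z)^{−2} and η(z) = ε^{−2/3} Q(z)⁴ (k² − μ(z)²) for all z ∈ I. Fix θ ∈ ℝ and define M₁₁(z) = ε^{−1/6} √π Q(z) e^{iθ} [ A(−η(z)) − i·B(−η(z)) ] and M₂₁(z) = −iε · M₁₁'(z). Then for all z ∈ I: (i) M₁₁'(z) = (i/ε) M₂₁(z), and (ii) M₂₁'(z) = (i/ε)(k² − μ(z)²) M₁₁(z) − iε (Q''(z)/Q(z)) M₁₁(z). -/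
open MeasureTheory Real Complex

/-!
The substitution `u = Q · F(ξ)` with `ξ' = s / Q²` is the Liouville transformation: the choice of
`ξ'` makes the `F'(ξ)` terms of `u''` cancel, so if `F'' = g F` then
`u'' = (Q'' / Q + s² g(ξ) / Q⁴) u`. For an Airy solution, `g(x) = x`, and `ξ = -η` with
`η = ε ^ (-2/3) Q⁴ p` turns the second term into `-p / ε²`. By linearity of the Airy equation,
`M₁₁` has this form with `F` a constant multiple of `A - iB`.
-/

section Liouville

variable {𝕜 E : Type*} [NontriviallyNormedField 𝕜] [NormedAddCommGroup E] [NormedSpace 𝕜 E]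

lemma hasDerivAt_liouville {Q ξ : 𝕜 → 𝕜} {F : 𝕜 → E} {s q' z : 𝕜} {f' : E} (hQz : Q z ≠ 0)
    (hQ : HasDerivAt Q q' z) (hξ : HasDerivAt ξ (s / Q z ^ 2) z) (hF : HasDerivAt F f' (ξ z)) :
    HasDerivAt (fun t ↦ Q t • F (ξ t)) (q' • F (ξ z) + (s / Q z) • f') z := by
  refine (hQ.smul (hF.scomp z hξ)).congr_deriv ?_
  simp only [Function.comp_apply]
  match_scalars <;> field_simp

lemma hasDerivAt_deriv_liouville {Q Q' ξ : 𝕜 → 𝕜} {F F' : 𝕜 → E} {s g q'' z : 𝕜}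
    (hQz : Q z ≠ 0) (hQ : HasDerivAt Q (Q' z) z) (hQ' : HasDerivAt Q' q'' z)
    (hξ : HasDerivAt ξ (s / Q z ^ 2) z) (hF : HasDerivAt F (F' (ξ z)) (ξ z))
    (hF' : HasDerivAt F' (g • F (ξ z)) (ξ z)) :
    HasDerivAt (fun t ↦ Q' t • F (ξ t) + (s / Q t) • F' (ξ t))
      ((q'' / Q z + s ^ 2 * g / Q z ^ 4) • Q z • F (ξ z)) z := by
  have hsQ : HasDerivAt (fun t ↦ s / Q t) (-(s * Q' z) / Q z ^ 2) z :=
    ((hasDerivAt_const z s).fun_div hQ hQz).congr_deriv (by ring)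
  refine ((hQ'.smul (hF.scomp z hξ)).add (hsQ.smul (hF'.scomp z hξ))).congr_deriv ?_
  simp only [Function.comp_apply]
  match_scalars
  · field_simp
    ring
  · field_simp

end Liouville

/-- `F` solves the Airy equation `F''(x) = x F(x)`. The derivative `F'` is carried as data, so that
twice differentiability is part of the notion. -/
structure IsAirySolution {𝕜 E : Type*} [NontriviallyNormedField 𝕜] [NormedAddCommGroup E]
    [NormedSpace 𝕜 E] (F F' : 𝕜 → E) : Prop where
  hasDerivAt : ∀ x, HasDerivAt F (F' x) x
  hasDerivAt_deriv : ∀ x, HasDerivAt F' (x • F x) x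

namespace IsAirySolution

lemma ofReal {F F' : ℝ → ℝ} (hF : IsAirySolution F F') :
    IsAirySolution (fun x ↦ (F x : ℂ)) (fun x ↦ (F' x : ℂ)) where
  hasDerivAt x := (hF.hasDerivAt x).ofReal_comp
  hasDerivAt_deriv x := by simpa using (hF.hasDerivAt_deriv x).ofReal_comp

lemma const_mul {𝕜 𝔸 : Type*} [NontriviallyNormedField 𝕜] [NormedRing 𝔸] [NormedAlgebra 𝕜 𝔸]
    {F F' : 𝕜 → 𝔸} (hF : IsAirySolution F F') (c : 𝔸) :
    IsAirySolution (fun x ↦ c * F x) (fun x ↦ c * F' x) where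
  hasDerivAt x := (hF.hasDerivAt x).const_mul c
  hasDerivAt_deriv x := by simpa using (hF.hasDerivAt_deriv x).const_mul c

variable {𝕜 E : Type*} [NontriviallyNormedField 𝕜] [NormedAddCommGroup E] [NormedSpace 𝕜 E]
  {F F' G G' : 𝕜 → E}

lemma sub (hF : IsAirySolution F F') (hG : IsAirySolution G G') :
    IsAirySolution (fun x ↦ F x - G x) (fun x ↦ F' x - G' x) where
  hasDerivAt x := (hF.hasDerivAt x).sub (hG.hasDerivAt x)
  hasDerivAt_deriv x := by
    simpa only [smul_sub] using (hF.hasDerivAt_deriv x).fun_sub (hG.hasDerivAt_deriv x)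

section WKB

variable {Q Q' η : 𝕜 → 𝕜} {s z : 𝕜}

lemma hasDerivAt_wkb (hF : IsAirySolution F F') (hQz : Q z ≠ 0) (hQ : HasDerivAt Q (Q' z) z)
    (hη : HasDerivAt η (s * (Q z ^ 2)⁻¹) z) :
    HasDerivAt (fun t ↦ Q t • F (-η t)) (Q' z • F (-η z) + (-s / Q z) • F' (-η z)) z :=
  hasDerivAt_liouville hQz hQ (hη.fun_neg.congr_deriv (by ring)) (hF.hasDerivAt _)

lemma hasDerivAt_deriv_wkb {U : Set 𝕜} {p q'' : 𝕜} (hF : IsAirySolution F F') (hU : IsOpen U)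
    (hQ₀ : ∀ t ∈ U, Q t ≠ 0) (hQ : ∀ t ∈ U, HasDerivAt Q (Q' t) t)
    (hη : ∀ t ∈ U, HasDerivAt η (s * (Q t ^ 2)⁻¹) t) (hz : z ∈ U) (hQ' : HasDerivAt Q' q'' z)
    (hηz : η z = s * Q z ^ 4 * p) :
    HasDerivAt (deriv fun t ↦ Q t • F (-η t))
      ((q'' / Q z - s ^ 3 * p) • Q z • F (-η z)) z := by
  have hQz := hQ₀ z hz
  have hderiv : HasDerivAt (fun t ↦ Q' t • F (-η t) + (-s / Q t) • F' (-η t))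
      ((q'' / Q z + (-s) ^ 2 * -η z / Q z ^ 4) • Q z • F (-η z)) z :=
    hasDerivAt_deriv_liouville hQz (hQ z hz) hQ' ((hη z hz).fun_neg.congr_deriv (by ring))
      (hF.hasDerivAt _) (hF.hasDerivAt_deriv _)
  have hcoeff : q'' / Q z + (-s) ^ 2 * -η z / Q z ^ 4 = q'' / Q z - s ^ 3 * p := by
    rw [hηz]
    field_simp
    ring
  rw [hcoeff] at hderiv
  refine hderiv.congr_of_eventuallyEq ?_
  filter_upwards [hU.mem_nhds hz] with t ht
  exact (hF.hasDerivAt_wkb (hQ₀ t ht) (hQ t ht) (hη t ht)).deriv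

end WKB

end IsAirySolution

lemma rpow_neg_two_thirds_pow_three {ε : ℝ} (hε : 0 ≤ ε) :
    (ε ^ (-(2 : ℝ) / 3)) ^ 3 = (ε ^ 2)⁻¹ := by
  rw [← Real.rpow_mul_natCast hε, ← Real.rpow_natCast, ← Real.rpow_neg hε]
  norm_num

theorem wkb_propagator_equation_general {ε : ℝ} (hε : 0 < ε) {U : Set ℝ} (hU : IsOpen U)
    {F F' : ℝ → ℂ} (hF : IsAirySolution F F') {p Q Q' Q'' η : ℝ → ℝ}
    (hQ₀ : ∀ z ∈ U, Q z ≠ 0) (hQ : ∀ z ∈ U, HasDerivAt Q (Q' z) z)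
    (hQ' : ∀ z ∈ U, HasDerivAt Q' (Q'' z) z)
    (hη : ∀ z ∈ U, HasDerivAt η (ε ^ (-(2 : ℝ) / 3) * (Q z ^ 2)⁻¹) z)
    (hηval : ∀ z ∈ U, η z = ε ^ (-(2 : ℝ) / 3) * Q z ^ 4 * p z)
    {M₁₁ M₂₁ : ℝ → ℂ} (hM₁₁ : ∀ z, M₁₁ z = Q z * F (-η z))
    (hM₂₁ : ∀ z, M₂₁ z = -I * ε * deriv M₁₁ z) {z : ℝ} (hz : z ∈ U) :
    HasDerivAt M₁₁ (I / ε * M₂₁ z) z ∧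
      HasDerivAt M₂₁ (I / ε * p z * M₁₁ z - I * ε * (Q'' z / Q z : ℝ) * M₁₁ z) z := by
  have hε₀ : (ε : ℂ) ≠ 0 := ofReal_ne_zero.mpr hε.ne'
  obtain rfl : M₁₁ = fun t ↦ Q t • F (-η t) := funext fun t ↦ by rw [hM₁₁, real_smul]
  obtain rfl : M₂₁ = fun t ↦ -I * ε * deriv (fun t ↦ Q t • F (-η t)) t := funext hM₂₁
  constructor
  · refine (hF.hasDerivAt_wkb (hQ₀ z hz) (hQ z hz)
      (hη z hz)).differentiableAt.hasDerivAt.congr_deriv ?_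
    field_simp
    rw [I_sq]
    ring
  · have hQz : (Q z : ℂ) ≠ 0 := ofReal_ne_zero.mpr (hQ₀ z hz)
    refine ((hF.hasDerivAt_deriv_wkb hU hQ₀ hQ hη hz (hQ' z hz)
      (hηval z hz)).const_mul (-I * (ε : ℂ))).congr_deriv ?_
    rw [rpow_neg_two_thirds_pow_three hε.le]
    simp only [real_smul]
    push_cast
    field_simp
    ring

/-- Lemma 1, part 1: the WKB approximation of the propagator, built from
solutions `A`, `B` of the Airy equation, satisfies the propagator equation up to the
correction term `−iε (Q''/Q) M₁₁`. -/
theorem wkb_propagator_equation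
    (ε : ℝ) (hε : 0 < ε) (a b : ℝ)
    (A B A' B' : ℝ → ℝ)
    (hA : ∀ x, HasDerivAt A (A' x) x) (hA' : ∀ x, HasDerivAt A' (x * A x) x)
    (hB : ∀ x, HasDerivAt B (B' x) x) (hB' : ∀ x, HasDerivAt B' (x * B x) x)
    (k : ℝ) (μ Q Q' Q'' η : ℝ → ℝ)
    (hμ : ContinuousOn μ (Set.Ioo a b))
    (hQpos : ∀ z ∈ Set.Ioo a b, 0 < Q z)
    (hQ : ∀ z ∈ Set.Ioo a b, HasDerivAt Q (Q' z) z)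
    (hQ' : ∀ z ∈ Set.Ioo a b, HasDerivAt Q' (Q'' z) z)
    (hη : ∀ z ∈ Set.Ioo a b, HasDerivAt η (ε ^ (-(2 : ℝ) / 3) * (Q z ^ 2)⁻¹) z)
    (hηval : ∀ z ∈ Set.Ioo a b,
      η z = ε ^ (-(2 : ℝ) / 3) * Q z ^ 4 * (k ^ 2 - μ z ^ 2))
    (θ : ℝ) (M₁₁ M₂₁ : ℝ → ℂ)
    (hM₁₁ : ∀ z, M₁₁ z =
      ((ε ^ (-(1 : ℝ) / 6) * Real.sqrt Real.pi * Q z : ℝ) : ℂ) *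
        Complex.exp (Complex.I * (θ : ℂ)) *
        ((A (-η z) : ℂ) - Complex.I * (B (-η z) : ℂ)))
    (hM₂₁ : ∀ z, M₂₁ z = -Complex.I * (ε : ℂ) * deriv M₁₁ z) :
    ∀ z ∈ Set.Ioo a b,
      deriv M₁₁ z = (Complex.I / (ε : ℂ)) * M₂₁ z ∧
      deriv M₂₁ z =
        (Complex.I / (ε : ℂ)) * ((k : ℂ) ^ 2 - (μ z : ℂ) ^ 2) * M₁₁ z -
          Complex.I * (ε : ℂ) * ((Q'' z / Q z : ℝ) : ℂ) * M₁₁ z := by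
  intro z hz
  have hF := ((IsAirySolution.mk hA hA').ofReal.sub
    ((IsAirySolution.mk hB hB').ofReal.const_mul I)).const_mul
      (((ε ^ (-(1 : ℝ) / 6) * √π : ℝ) : ℂ) * exp (I * θ))
  obtain ⟨h₁₁, h₂₁⟩ := wkb_propagator_equation_general hε isOpen_Ioo hF
    (fun t ht ↦ (hQpos t ht).ne') hQ hQ' hη hηval
    (fun t ↦ by rw [hM₁₁]; push_cast; ring) hM₂₁ hz
  exact ⟨h₁₁.deriv, by simpa only [ofReal_sub, ofReal_pow] using h₂₁.deriv⟩
end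

section
/- Let ε > 0, let I ⊂ ℝ be an open interval, and let A, B : ℝ → ℝ be differentiable functions satisfying the Wronskian identity A(x)·B'(x) − A'(x)·B(x) = 1/π for all x ∈ ℝ. Let Q : I → (0, ∞) be differentiable and let η : I → ℝ be differentiable with η'(z) = ε^{−2/3} Q(z)^{−2} for all z ∈ I. Fix θ ∈ ℝ and define M₁₁(z) = ε^{−1/6} √π Q(z) e^{iθ} [ A(−η(z)) − i·B(−η(z)) ] and M₂₁(z) = −iε · M₁₁'(z). Then the determinant of the 2×2 complex matrix with rows (M₁₁(z), −conj(M₁₁(z))) and (M₂₁(z), conj(M₂₁(z))) equals 2 for every z ∈ I; equivalently, 2·Re[ M₁₁(z) · conj(M₂₁(z)) ] = 2. -/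
open MeasureTheory Real Complex

/-!
For a wave `f` the flux `Im (conj f · f')` ignores constant phases, picks up `q²` under a real
amplitude `q`, picks up `φ'` under a change of phase variable `φ`, and equals minus the Wronskian of
`A` and `B` when `f = A - iB`. The determinant is `2ε` times the flux of `M₁₁`; there the amplitude
`ε^(-1/6) √π Q` and the phase derivative `-η' = -ε^(-2/3) Q⁻²` are matched so that all dependence on
`Q` and `ε` cancels, leaving `2π` times the Wronskian.
-/

open scoped ComplexConjugate

/-- The flux `Im (conj f · f')` of a complex wave `f` of a real variable, with the physical
prefactor left out. It carries its meaning only where `f` is differentiable, since `deriv` is `0`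
elsewhere. -/
noncomputable def waveFlux (f : ℝ → ℂ) (z : ℝ) : ℝ :=
  (conj (f z) * deriv f z).im

section waveFlux

variable {f : ℝ → ℂ} {z : ℝ}

theorem waveFlux_const_mul (c : ℂ) :
    waveFlux (fun t => c * f t) z = normSq c * waveFlux f z := by
  simp only [waveFlux, deriv_const_mul_field, ← im_ofReal_mul, normSq_eq_conj_mul_self, map_mul]
  ring_nf

theorem waveFlux_ofReal_mul {q : ℝ → ℝ} (hq : DifferentiableAt ℝ q z)
    (hf : DifferentiableAt ℝ f z) :
    waveFlux (fun t => q t * f t) z = q z ^ 2 * waveFlux f z := by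
  have hderiv : deriv (fun t => (q t : ℂ) * f t) z = deriv q z * f z + q z * deriv f z :=
    (hq.hasDerivAt.ofReal_comp.mul hf.hasDerivAt).deriv
  -- The term containing `q'` is the real number `q q' |f|²`.
  have hsplit : conj (q z * f z) * (deriv q z * f z + q z * deriv f z) =
      ((q z * deriv q z * normSq (f z) : ℝ) : ℂ) +
        ((q z ^ 2 : ℝ) : ℂ) * (conj (f z) * deriv f z) := by
    push_cast
    rw [normSq_eq_conj_mul_self, map_mul, conj_ofReal]
    ring
  rw [waveFlux, hderiv, hsplit, add_im, ofReal_im, zero_add, im_ofReal_mul, waveFlux]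

theorem waveFlux_comp {φ : ℝ → ℝ} {φ' : ℝ} (hf : DifferentiableAt ℝ f (φ z))
    (hφ : HasDerivAt φ φ' z) :
    waveFlux (fun t => f (φ t)) z = φ' * waveFlux f (φ z) := by
  have hderiv : deriv (fun t => f (φ t)) z = φ' * deriv f (φ z) :=
    (hf.hasDerivAt.scomp z hφ).deriv
  rw [waveFlux, hderiv, mul_left_comm, im_ofReal_mul, waveFlux]

theorem waveFlux_ofReal_sub_I_mul_ofReal {A B : ℝ → ℝ} {A' B' : ℝ}
    (hA : HasDerivAt A A' z) (hB : HasDerivAt B B' z) :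
    waveFlux (fun t => A t - I * B t) z = A' * B z - A z * B' := by
  have hderiv : deriv (fun t => (A t : ℂ) - I * B t) z = A' - I * B' :=
    (hA.ofReal_comp.sub (hB.ofReal_comp.const_mul I)).deriv
  have hprod : conj ((A z : ℂ) - I * B z) * (A' - I * B') =
      ((A z * A' + B z * B' : ℝ) : ℂ) + ((A' * B z - A z * B' : ℝ) : ℂ) * I := by
    push_cast
    simp only [map_sub, map_mul, conj_I, conj_ofReal]
    linear_combination -(B z * B' : ℂ) * I_sq
  rw [waveFlux, hderiv, hprod, add_im, ofReal_im, zero_add, im_ofReal_mul, I_im, mul_one]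

theorem re_mul_conj_neg_I_mul_deriv (ε : ℝ) :
    (f z * conj (-I * ε * deriv f z)).re = ε * waveFlux f z := by
  have hconj : f z * conj (-I * ε * deriv f z) = ε * (I * conj (conj (f z) * deriv f z)) := by
    simp only [map_mul, map_neg, conj_I, conj_ofReal, conj_conj]
    ring
  rw [hconj, re_ofReal_mul, I_mul_re, conj_im, neg_neg, waveFlux]

end waveFlux

theorem det_of_neg_conj_conj {R : Type*} [CommRing R] [StarRing R] (x y : R) :
    Matrix.det !![x, -conj x; y, conj y] = x * conj y + conj (x * conj y) := by
  rw [Matrix.det_fin_two_of, map_mul, starRingEnd_self_apply]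
  ring

theorem eps_mul_wkb_amplitude_sq_mul_phase_deriv {ε : ℝ} (hε : 0 < ε) {r : ℝ} (hr : r ≠ 0) :
    ε * ((ε ^ (-(1 : ℝ) / 6) * √π * r) ^ 2 * (ε ^ (-(2 : ℝ) / 3) * (r ^ 2)⁻¹)) = π := by
  have hpow : ε * ((ε ^ (-(1 : ℝ) / 6)) ^ 2 * ε ^ (-(2 : ℝ) / 3)) = 1 := by
    nth_rewrite 1 [← rpow_one ε]
    rw [← rpow_mul_natCast hε.le, ← rpow_add hε, ← rpow_add hε]
    norm_num
  calc _ = ε * ((ε ^ (-(1 : ℝ) / 6)) ^ 2 * ε ^ (-(2 : ℝ) / 3)) * √π ^ 2 *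
        (r ^ 2 * (r ^ 2)⁻¹) := by ring
    _ = π := by rw [hpow, sq_sqrt pi_nonneg, mul_inv_cancel₀ (pow_ne_zero 2 hr), one_mul, mul_one]

theorem waveFlux_wkb_ansatz {A B q φ : ℝ → ℝ} {A' B' φ' z : ℝ}
    (hA : HasDerivAt A A' (φ z)) (hB : HasDerivAt B B' (φ z))
    (hq : DifferentiableAt ℝ q z) (hφ : HasDerivAt φ φ' z) (θ : ℝ) :
    waveFlux (fun t => q t * exp (I * θ) * (A (φ t) - I * B (φ t))) z =
      q z ^ 2 * φ' * (A' * B (φ z) - A (φ z) * B') := by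
  have hphase : normSq (exp (I * θ)) = 1 := by
    rw [normSq_eq_norm_sq, norm_exp_I_mul_ofReal, one_pow]
  have hAB : DifferentiableAt ℝ (fun x => (A x : ℂ) - I * B x) (φ z) :=
    (hA.ofReal_comp.sub (hB.ofReal_comp.const_mul I)).differentiableAt
  have hABφ : DifferentiableAt ℝ (fun t => (A (φ t) : ℂ) - I * B (φ t)) z :=
    (hAB.hasDerivAt.scomp z hφ).differentiableAt
  simp only [mul_assoc]
  rw [waveFlux_ofReal_mul hq (hABφ.const_mul _), waveFlux_const_mul, hphase,
    waveFlux_comp hAB hφ, waveFlux_ofReal_sub_I_mul_ofReal hA hB]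
  ring

theorem wkb_propagator_determinant_general {ε : ℝ} (hε : 0 < ε)
    {A B Q η : ℝ → ℝ} {A' B' z : ℝ}
    (hA : HasDerivAt A A' (-η z)) (hB : HasDerivAt B B' (-η z))
    (hQz : Q z ≠ 0) (hQ : DifferentiableAt ℝ Q z)
    (hη : HasDerivAt η (ε ^ (-(2 : ℝ) / 3) * (Q z ^ 2)⁻¹) z) {θ : ℝ} {M₁₁ M₂₁ : ℝ → ℂ}
    (hM₁₁ : ∀ t, M₁₁ t = ((ε ^ (-(1 : ℝ) / 6) * √π * Q t : ℝ) : ℂ) * exp (I * θ) *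
      (A (-η t) - I * B (-η t)))
    (hM₂₁ : M₂₁ z = -I * ε * deriv M₁₁ z) :
    Matrix.det !![M₁₁ z, -conj (M₁₁ z); M₂₁ z, conj (M₂₁ z)] =
        ((2 * π * (A (-η z) * B' - A' * B (-η z)) : ℝ) : ℂ) ∧
      2 * (M₁₁ z * conj (M₂₁ z)).re = 2 * π * (A (-η z) * B' - A' * B (-η z)) := by
  have hflux : ε * waveFlux M₁₁ z = π * (A (-η z) * B' - A' * B (-η z)) := by
    rw [funext hM₁₁, waveFlux_wkb_ansatz (φ := fun t => -η t) hA hB (hQ.const_mul _) hη.fun_neg]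
    linear_combination (A (-η z) * B' - A' * B (-η z)) *
      eps_mul_wkb_amplitude_sq_mul_phase_deriv hε hQz
  have hre : 2 * (M₁₁ z * conj (M₂₁ z)).re = 2 * π * (A (-η z) * B' - A' * B (-η z)) := by
    rw [hM₂₁, re_mul_conj_neg_I_mul_deriv, hflux, mul_assoc]
  exact ⟨by rw [det_of_neg_conj_conj, add_conj, hre], hre⟩

/-- Lemma 1, part 2: the WKB approximation of the propagator, built from
functions `A`, `B` with constant Wronskian `A B' − A' B = 1/π`, has determinant 2;
equivalently `2 Re[M₁₁ conj(M₂₁)] = 2`. -/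
theorem wkb_propagator_determinant
    (ε : ℝ) (hε : 0 < ε) (a b : ℝ)
    (A B A' B' : ℝ → ℝ)
    (hA : ∀ x, HasDerivAt A (A' x) x) (hB : ∀ x, HasDerivAt B (B' x) x)
    (hW : ∀ x, A x * B' x - A' x * B x = 1 / Real.pi)
    (Q Q' η : ℝ → ℝ)
    (hQpos : ∀ z ∈ Set.Ioo a b, 0 < Q z)
    (hQ : ∀ z ∈ Set.Ioo a b, HasDerivAt Q (Q' z) z)
    (hη : ∀ z ∈ Set.Ioo a b, HasDerivAt η (ε ^ (-(2 : ℝ) / 3) * (Q z ^ 2)⁻¹) z)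
    (θ : ℝ) (M₁₁ M₂₁ : ℝ → ℂ)
    (hM₁₁ : ∀ z, M₁₁ z =
      ((ε ^ (-(1 : ℝ) / 6) * Real.sqrt Real.pi * Q z : ℝ) : ℂ) *
        Complex.exp (Complex.I * (θ : ℂ)) *
        ((A (-η z) : ℂ) - Complex.I * (B (-η z) : ℂ)))
    (hM₂₁ : ∀ z, M₂₁ z = -Complex.I * (ε : ℂ) * deriv M₁₁ z) :
    ∀ z ∈ Set.Ioo a b,
      Matrix.det !![M₁₁ z, -(starRingEnd ℂ) (M₁₁ z); M₂₁ z, (starRingEnd ℂ) (M₂₁ z)] = 2 ∧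
      2 * (M₁₁ z * (starRingEnd ℂ) (M₂₁ z)).re = 2 := by
  intro z hz
  simpa [hW, pi_ne_zero] using wkb_propagator_determinant_general hε (hA (-η z)) (hB (-η z))
    (hQpos z hz).ne' (hQ z hz).differentiableAt (hη z hz) hM₁₁ (hM₂₁ z)
end

section
/- Let k > 0, z_T < 0, and let μ : [z_T, 0] → ℝ be continuous with μ(z_T) = k and μ(z) < k for z ∈ (z_T, 0]. Define φ(z) = ∫_{z_T}^z √(k² − μ(z')²) dz' and Q(z) = (3φ(z)/2)^{1/6} / (k² − μ(z)²)^{1/4} for z ∈ (z_T, 0]. Assume moreover that z ↦ μ(z)² is continuously differentiable on a neighborhood of z_T with γ := −(d/dz)[μ²](z_T) > 0. Then lim_{z → z_T⁺} Q(z) = γ^{−1/6}. -/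
open MeasureTheory Real Filter

/-!
At a simple turning point `k² - μ² ~ γ (z - z_T)`. Equivalence to an eventually nonnegative
function survives real powers and integration from the base point, so
`3φ/2 ~ √γ (z - z_T)^{3/2}`. The numerator and the denominator of `Q` then both carry
`(z - z_T)^{1/4}`, since `3/2 · 1/6 = 1/4`; these cancel and leave `γ^{1/12 - 1/4} = γ^{-1/6}`.
-/

open Asymptotics Set Topology

theorem eventually_nhdsGT_forall_mem_Ioc {α : Type*} [LinearOrder α] [TopologicalSpace α]
    [OrderTopology α] [DenselyOrdered α] [NoMaxOrder α] {a : α} {p : α → Prop}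
    (h : ∀ᶠ t in 𝓝[>] a, p t) :
    ∀ᶠ z in 𝓝[>] a, ∀ t ∈ Ioc a z, p t := by
  obtain ⟨b, hab, hb⟩ := mem_nhdsGT_iff_exists_Ioc_subset.1 h
  filter_upwards [Ioc_mem_nhdsGT hab] with z hz t ht
  exact hb ⟨ht.1, ht.2.trans hz.2⟩

section IntegralAsymptotics

variable {E : Type*} [NormedAddCommGroup E] {ν : Measure ℝ} {a : ℝ}

theorem eventually_nhdsGT_intervalIntegrable {f : ℝ → E}
    (hf : IntegrableAtFilter f (𝓝[>] a) ν) :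
    ∀ᶠ z in 𝓝[>] a, IntervalIntegrable f ν a z := by
  obtain ⟨s, hs, hfs⟩ := hf
  filter_upwards [self_mem_nhdsWithin, eventually_nhdsGT_forall_mem_Ioc hs] with z hz hsz
  exact (intervalIntegrable_iff_integrableOn_Ioc_of_le (mem_Ioi.1 hz).le).2 (hfs.mono_set hsz)

theorem isLittleO_intervalIntegral_nhdsGT [NormedSpace ℝ E] {f : ℝ → E} {g : ℝ → ℝ}
    (hfg : f =o[𝓝[>] a] g) (hg₀ : ∀ᶠ t in 𝓝[>] a, 0 ≤ g t)
    (hg : IntegrableAtFilter g (𝓝[>] a) ν) :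
    (fun z => ∫ t in a..z, f t ∂ν) =o[𝓝[>] a] fun z => ∫ t in a..z, g t ∂ν := by
  refine IsLittleO.of_bound fun c hc => ?_
  filter_upwards [self_mem_nhdsWithin, eventually_nhdsGT_intervalIntegrable hg,
    eventually_nhdsGT_forall_mem_Ioc ((hfg.bound hc).and hg₀)] with z hz hgz hbound
  calc ‖∫ t in a..z, f t ∂ν‖
      ≤ ∫ t in a..z, c * g t ∂ν := by
        refine intervalIntegral.norm_integral_le_of_norm_le (mem_Ioi.1 hz).le
          (ae_of_all _ fun t ht => ?_) (hgz.const_mul c)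
        simpa only [norm_of_nonneg (hbound t ht).2] using (hbound t ht).1
    _ = c * ∫ t in a..z, g t ∂ν := intervalIntegral.integral_const_mul c g
    _ ≤ c * ‖∫ t in a..z, g t ∂ν‖ := by gcongr; exact le_norm_self _

theorem isEquivalent_intervalIntegral_nhdsGT {f g : ℝ → ℝ}
    (hfg : f ~[𝓝[>] a] g) (hg₀ : ∀ᶠ t in 𝓝[>] a, 0 ≤ g t)
    (hfm : StronglyMeasurableAtFilter f (𝓝[>] a) ν) (hg : IntegrableAtFilter g (𝓝[>] a) ν) :
    (fun z => ∫ t in a..z, f t ∂ν) ~[𝓝[>] a] fun z => ∫ t in a..z, g t ∂ν := by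
  have hf : IntegrableAtFilter f (𝓝[>] a) ν := hfg.isBigO.integrableAtFilter hfm hg
  refine (isLittleO_intervalIntegral_nhdsGT hfg.isLittleO hg₀ hg).congr' ?_ .rfl
  filter_upwards [eventually_nhdsGT_intervalIntegrable hf,
    eventually_nhdsGT_intervalIntegrable hg] with z hfz hgz
  exact intervalIntegral.integral_sub hfz hgz

end IntegralAsymptotics

theorem integral_sub_rpow {r : ℝ} (hr : -1 < r) (a z : ℝ) :
    ∫ t in a..z, (t - a) ^ r = (z - a) ^ (r + 1) / (r + 1) := by
  rw [intervalIntegral.integral_comp_sub_right (fun t => t ^ r), integral_rpow (.inl hr),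
    sub_self, zero_rpow (by linarith), sub_zero]

theorem integrableAtFilter_sub_rpow {r : ℝ} (hr : -1 < r) (a : ℝ) :
    IntegrableAtFilter (fun t => (t - a) ^ r) (𝓝[>] a) := by
  have hint : IntervalIntegrable (fun t => (t - a) ^ r) volume a (a + 1) := by
    simpa only [zero_add, add_comm (1 : ℝ)] using
      (intervalIntegral.intervalIntegrable_rpow' (a := 0) (b := 1) hr).comp_sub_right a
  exact ⟨Ioc a (a + 1), Ioc_mem_nhdsGT (by linarith), hint.1⟩

theorem isEquivalent_integral_of_isEquivalent_mul_sub_rpow {f : ℝ → ℝ} {a c r : ℝ} (hc : 0 ≤ c)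
    (hr : -1 < r) (hfm : StronglyMeasurableAtFilter f (𝓝[>] a))
    (hf : f ~[𝓝[>] a] fun t => c * (t - a) ^ r) :
    (fun z => ∫ t in a..z, f t) ~[𝓝[>] a] fun z => c / (r + 1) * (z - a) ^ (r + 1) := by
  have hnonneg : ∀ᶠ t in 𝓝[>] a, 0 ≤ c * (t - a) ^ r := by
    filter_upwards [self_mem_nhdsWithin] with t ht
    exact mul_nonneg hc (rpow_nonneg (sub_pos.2 ht).le r)
  obtain ⟨s, hs, hint⟩ := integrableAtFilter_sub_rpow hr a
  refine (isEquivalent_intervalIntegral_nhdsGT hf hnonneg hfm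
    ⟨s, hs, hint.const_mul c⟩).congr_right (.of_forall fun z => ?_)
  simp only [intervalIntegral.integral_const_mul, integral_sub_rpow hr]
  ring

theorem isEquivalent_rpow_of_eventually_nonneg {α : Type*} {l : Filter α} {u v : α → ℝ}
    (hv : ∀ᶠ x in l, 0 ≤ v x) (huv : u ~[l] v) (r : ℝ) :
    (fun x => u x ^ r) ~[l] fun x => v x ^ r := by
  have habs : v =ᶠ[l] fun x => |v x| := hv.mono fun x hx => (abs_of_nonneg hx).symm
  exact ((huv.congr_right habs).rpow fun x => abs_nonneg (v x)).congr_right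
    (habs.symm.fun_comp (· ^ r))

theorem isEquivalent_rpow_of_isEquivalent_mul_sub_rpow {f : ℝ → ℝ} {a c r : ℝ} (hc : 0 ≤ c)
    (hf : f ~[𝓝[>] a] fun t => c * (t - a) ^ r) (s : ℝ) :
    (fun t => f t ^ s) ~[𝓝[>] a] fun t => c ^ s * (t - a) ^ (r * s) := by
  have hpos : ∀ᶠ t in 𝓝[>] a, 0 < t - a := by
    filter_upwards [self_mem_nhdsWithin] with t ht using sub_pos.2 ht
  refine (isEquivalent_rpow_of_eventually_nonneg
    (hpos.mono fun t ht => by positivity) hf s).congr_right (hpos.mono fun t ht => ?_)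
  dsimp only
  rw [mul_rpow hc (by positivity), rpow_mul ht.le]

theorem isEquivalent_sub_smul_of_hasDerivWithinAt {𝕜 F : Type*} [NontriviallyNormedField 𝕜]
    [NormedAddCommGroup F] [NormedSpace 𝕜 F] {f : 𝕜 → F} {f' : F} {s : Set 𝕜} {a : 𝕜}
    (hf : HasDerivWithinAt f f' s a) (hfa : f a = 0) (hf' : f' ≠ 0) :
    f ~[𝓝[s] a] fun t => (t - a) • f' := by
  have hlittle := hasDerivWithinAt_iff_isLittleO.1 hf
  simp only [hfa, sub_zero] at hlittle
  refine hlittle.trans_isBigO (IsBigO.of_bound ‖f'‖⁻¹ (.of_forall fun t => ?_))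
  rw [norm_smul, mul_comm ‖t - a‖, inv_mul_cancel_left₀ (norm_ne_zero_iff.2 hf')]

theorem isEquivalent_integral_sqrt_of_isEquivalent_mul_sub {f : ℝ → ℝ} {a γ : ℝ} (hγ : 0 ≤ γ)
    (hfm : StronglyMeasurableAtFilter f (𝓝[>] a))
    (hf : f ~[𝓝[>] a] fun t => γ * (t - a)) :
    (fun z => ∫ t in a..z, √(f t)) ~[𝓝[>] a] fun z => 2 / 3 * √γ * (z - a) ^ ((3 : ℝ) / 2) := by
  have hsqrt : (fun t => √(f t)) ~[𝓝[>] a] fun t => √γ * (t - a) ^ ((1 : ℝ) / 2) := by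
    simpa only [sqrt_eq_rpow, one_mul] using
      isEquivalent_rpow_of_isEquivalent_mul_sub_rpow (r := 1) hγ (by simpa only [rpow_one] using hf)
        (1 / 2)
  obtain ⟨s, hs, hfs⟩ := hfm
  refine (isEquivalent_integral_of_isEquivalent_mul_sub_rpow (sqrt_nonneg γ) (by norm_num)
    ⟨s, hs, continuous_sqrt.comp_aestronglyMeasurable hfs⟩ hsqrt).congr_right
    (.of_forall fun z => ?_)
  rw [show (1 : ℝ) / 2 + 1 = 3 / 2 by norm_num]
  ring

theorem wkb_amplitude_limit_at_turning_point_general {f φ Q : ℝ → ℝ} {a γ : ℝ}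
    (hfm : StronglyMeasurableAtFilter f (𝓝[>] a)) (hfa : f a = 0)
    (hf : HasDerivWithinAt f γ (Ioi a) a) (hγ : 0 < γ)
    (hφ : φ =ᶠ[𝓝[>] a] fun z => ∫ t in a..z, √(f t))
    (hQ : Q =ᶠ[𝓝[>] a] fun z => (3 * φ z / 2) ^ ((1 : ℝ) / 6) / f z ^ ((1 : ℝ) / 4)) :
    Tendsto Q (𝓝[>] a) (𝓝 (γ ^ (-(1 : ℝ) / 6))) := by
  have hlinear : f ~[𝓝[>] a] fun z => γ * (z - a) := by
    simpa only [smul_eq_mul, mul_comm γ] using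
      isEquivalent_sub_smul_of_hasDerivWithinAt hf hfa hγ.ne'
  have hphase : (fun z => 3 * φ z / 2) ~[𝓝[>] a] fun z => √γ * (z - a) ^ ((3 : ℝ) / 2) := by
    have hscaled := (IsEquivalent.refl (u := fun _ => (3 / 2 : ℝ))).mul (hφ.trans_isEquivalent
      (isEquivalent_integral_sqrt_of_isEquivalent_mul_sub hγ.le hfm hlinear))
    convert hscaled using 2 <;> simp only [Pi.mul_apply] <;> ring
  have hnum := isEquivalent_rpow_of_isEquivalent_mul_sub_rpow (sqrt_nonneg γ) hphase (1 / 6)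
  have hden := isEquivalent_rpow_of_isEquivalent_mul_sub_rpow (r := 1) hγ.le
    (by simpa only [rpow_one] using hlinear) (1 / 4)
  have hconst : √γ ^ ((1 : ℝ) / 6) / γ ^ ((1 : ℝ) / 4) = γ ^ (-(1 : ℝ) / 6) := by
    rw [sqrt_eq_rpow, ← rpow_mul hγ.le, ← rpow_sub hγ]
    norm_num
  refine IsEquivalent.tendsto_const (hQ.trans_isEquivalent ((hnum.div hden).congr_right ?_))
  filter_upwards [self_mem_nhdsWithin] with z hz
  have hpow : (z - a) ^ ((1 : ℝ) / 4) ≠ 0 := (rpow_pos_of_pos (sub_pos.2 hz) _).ne'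
  rw [Pi.div_apply, show (3 : ℝ) / 2 * (1 / 6) = 1 / 4 by norm_num, one_mul,
    mul_div_mul_right _ _ hpow, hconst, Function.const_apply]

/-- at a simple turning point with `γ = −(μ²)'(z_T) > 0`, the WKB amplitude
factor `Q(z) = (3φ(z)/2)^{1/6}/(k²−μ(z)²)^{1/4}` has the limit `γ^{−1/6}` as `z → z_T⁺`. -/
theorem wkb_amplitude_limit_at_turning_point
    (k zT : ℝ) (hk : 0 < k) (hzT : zT < 0)
    (μ : ℝ → ℝ) (hμc : ContinuousOn μ (Set.Icc zT 0))
    (hμT : μ zT = k) (hμlt : ∀ z ∈ Set.Ioc zT 0, μ z < k)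
    (φ Q : ℝ → ℝ)
    (hφ : ∀ z, φ z = ∫ z' in zT..z, Real.sqrt (k ^ 2 - μ z' ^ 2))
    (hQ : ∀ z ∈ Set.Ioc zT 0,
      Q z = (3 * φ z / 2) ^ ((1 : ℝ) / 6) / (k ^ 2 - μ z ^ 2) ^ ((1 : ℝ) / 4))
    (hμ2 : ContDiffAt ℝ 1 (fun z => μ z ^ 2) zT)
    (γ : ℝ) (hγ : γ = -deriv (fun z => μ z ^ 2) zT) (hγpos : 0 < γ) :
    Tendsto Q (nhdsWithin zT (Set.Ioi zT)) (nhds (γ ^ (-(1 : ℝ) / 6))) := by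
  have hcont : ContinuousOn (fun z => k ^ 2 - μ z ^ 2) (Set.Ioc zT 0) :=
    continuousOn_const.sub ((hμc.mono Ioc_subset_Icc_self).pow 2)
  have hderiv : HasDerivAt (fun z => k ^ 2 - μ z ^ 2) γ zT := by
    rw [hγ]
    exact (hμ2.differentiableAt one_ne_zero).hasDerivAt.const_sub (k ^ 2)
  exact wkb_amplitude_limit_at_turning_point_general
    ⟨_, Ioc_mem_nhdsGT hzT, hcont.aestronglyMeasurable measurableSet_Ioc⟩
    (by rw [hμT, sub_self]) hderiv.hasDerivWithinAt hγpos (.of_forall hφ)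
    (mem_of_superset (Ioc_mem_nhdsGT hzT) hQ)
end

section
/- Let k > 0, z_T < 0, and let μ : [z_T, 0] → ℝ be continuous with μ(z_T) = k and μ(z) < k for z ∈ (z_T, 0]. Define φ(z) = ∫_{z_T}^z √(k² − μ(z')²) dz' and Q(z) = (3φ(z)/2)^{1/6} / (k² − μ(z)²)^{1/4} for z ∈ (z_T, 0]. Assume moreover that z ↦ μ(z)² is twice continuously differentiable on a neighborhood of z_T, with γ := −(d/dz)[μ²](z_T) > 0 and θ := (1/2)(d²/dz²)[μ²](z_T). Then the derivative Q' extends continuously to the turning point with lim_{z → z_T⁺} Q'(z) = θ / (5 γ^{7/6}). -/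
open MeasureTheory Real Filter

/-!
Write `f = k² - μ²`, which has a simple zero at `a = z_T`, and `P = 3φ/2`, so that `P' = (3/2) √f`.
Then `Q' = (1/4) P ^ (-5/6) f ^ (-5/4) (f ^ (3/2) - P f')`, and the terms in `√f f'` cancel in the
derivative of the last factor, leaving `-P f''`. With `s = z - a`, L'Hôpital's rule gives
`P ~ √γ s ^ (3/2)` and then `f ^ (3/2) - P f' ~ -(2/5) √γ f''(a) s ^ (5/2)`, while `f ~ γ s`.
The powers of `s` in `Q'` add up to `-5/4 - 5/4 + 5/2 = 0`.
-/

open scoped Topology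

lemma eventually_pos_of_tendsto_div {α 𝕜 : Type*} [Field 𝕜] [LinearOrder 𝕜]
    [IsStrictOrderedRing 𝕜] [TopologicalSpace 𝕜] [ClosedIicTopology 𝕜] {l : Filter α}
    {F G : α → 𝕜} {c : 𝕜} (hG : ∀ᶠ x in l, 0 < G x) (h : Tendsto (fun x => F x / G x) l (𝓝 c))
    (hc : 0 < c) : ∀ᶠ x in l, 0 < F x := by
  filter_upwards [hG, h.eventually_const_lt hc] with x hGx hx
  exact (div_pos_iff_of_pos_right hGx).1 hx

lemma eventually_sub_pos_nhdsGT (a : ℝ) : ∀ᶠ z in 𝓝[>] a, 0 < z - a :=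
  eventually_mem_nhdsWithin.mono fun _ hz => sub_pos.2 hz

lemma tendsto_div_sub_nhdsGT {f : ℝ → ℝ} {f' a : ℝ} (hf : HasDerivAt f f' a)
    (hfa : f a = 0) : Tendsto (fun z => f z / (z - a)) (𝓝[>] a) (𝓝 f') := by
  refine (hf.tendsto_slope.mono_left (nhdsGT_le_nhdsNE a)).congr fun z => ?_
  rw [slope_def_field, hfa, sub_zero]

lemma hasDerivAt_sub_rpow {a z : ℝ} (hz : z - a ≠ 0) (p : ℝ) :
    HasDerivAt (fun y => (y - a) ^ p) (p * (z - a) ^ (p - 1)) z := by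
  simpa only [one_mul] using ((hasDerivAt_id' z).sub_const a).rpow_const (p := p) (Or.inl hz)

lemma tendsto_rpow_nhds_zero {α : Type*} {l : Filter α} {F : α → ℝ} {p : ℝ} (hp : 0 < p)
    (hF : Tendsto F l (𝓝 0)) : Tendsto (fun x => F x ^ p) l (𝓝 0) := by
  simpa only [zero_rpow hp.ne'] using hF.rpow_const (p := p) (Or.inr hp.le)

lemma tendsto_div_sub_rpow_of_hasDerivAt {F F' : ℝ → ℝ} {a p c : ℝ} (hp : 0 < p)
    (hF : ∀ᶠ z in 𝓝[>] a, HasDerivAt F (F' z) z) (hF0 : Tendsto F (𝓝[>] a) (𝓝 0))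
    (hF' : Tendsto (fun z => F' z / (z - a) ^ (p - 1)) (𝓝[>] a) (𝓝 c)) :
    Tendsto (fun z => F z / (z - a) ^ p) (𝓝[>] a) (𝓝 (c / p)) := by
  have hpos := eventually_sub_pos_nhdsGT a
  have hsub : Tendsto (fun z => z - a) (𝓝[>] a) (𝓝 0) :=
    tendsto_sub_nhds_zero_iff.2 (tendsto_id.mono_left nhdsWithin_le_nhds)
  refine HasDerivAt.lhopital_zero_nhdsGT hF
    (hpos.mono fun z hz => hasDerivAt_sub_rpow hz.ne' p) ?_ hF0 (tendsto_rpow_nhds_zero hp hsub) ?_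
  · filter_upwards [hpos] with z hz
    exact (mul_pos hp (rpow_pos_of_pos hz _)).ne'
  · refine (hF'.div_const p).congr fun z => ?_
    rw [div_div, mul_comm]

lemma eventually_differentiableAt_of_contDiffAt {𝕜 E F : Type*} [NontriviallyNormedField 𝕜]
    [NormedAddCommGroup E] [NormedSpace 𝕜 E] [NormedAddCommGroup F] [NormedSpace 𝕜 F]
    {f : E → F} {x : E} (hf : ContDiffAt 𝕜 1 f x) : ∀ᶠ y in 𝓝 x, DifferentiableAt 𝕜 f y :=
  (hf.eventually (by simp)).mono fun _ hy => hy.differentiableAt one_ne_zero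

lemma eventually_hasDerivAt_integral {E : Type*} [NormedAddCommGroup E] [NormedSpace ℝ E]
    [CompleteSpace E] {g : ℝ → E} {a : ℝ} (hg : ∀ᶠ z in 𝓝 a, ContinuousAt g z) :
    ∀ᶠ z in 𝓝 a, HasDerivAt (fun y => ∫ t in a..y, g t) (g z) z := by
  obtain ⟨ε, hε, hball⟩ := Metric.eventually_nhds_iff_ball.1 hg
  have hcont : ContinuousOn g (Metric.ball a ε) :=
    continuousOn_of_forall_continuousAt hball
  filter_upwards [Metric.ball_mem_nhds a hε] with z hz
  have hsub : Set.uIcc a z ⊆ Metric.ball a ε :=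
    (convex_ball a ε).ordConnected.uIcc_subset (Metric.mem_ball_self hε) hz
  exact intervalIntegral.integral_hasDerivAt_right (hcont.mono hsub).intervalIntegrable
    (hcont.stronglyMeasurableAtFilter Metric.isOpen_ball z hz) (hball z hz)

/-- The phase integral of the equation `ψ'' + f ψ = 0` from the turning point `a`. It is `φ` in the
theorem, for `f = k² - μ²`; the square root truncates `f` at `0`. -/
noncomputable def wkbPhase (f : ℝ → ℝ) (a z : ℝ) : ℝ :=
  ∫ t in a..z, √(f t)

/-- The WKB amplitude factor of the equation `ψ'' + f ψ = 0` at the turning point `a`. It is `Q` in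
the theorem, for `f = k² - μ²`, and has its meaning where `f` is positive. -/
noncomputable def wkbAmplitude (f : ℝ → ℝ) (a z : ℝ) : ℝ :=
  (3 * wkbPhase f a z / 2) ^ (1 / 6 : ℝ) / f z ^ (1 / 4 : ℝ)

section TurningPoint

variable {f : ℝ → ℝ} {a : ℝ}

lemma eventually_hasDerivAt_wkbPhase (hf : ∀ᶠ z in 𝓝 a, ContinuousAt f z) :
    ∀ᶠ z in 𝓝 a, HasDerivAt (wkbPhase f a) (√(f z)) z :=
  eventually_hasDerivAt_integral (hf.mono fun _ hz => hz.sqrt)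

lemma tendsto_wkbPhase_zero (hf : ∀ᶠ z in 𝓝 a, ContinuousAt f z) :
    Tendsto (wkbPhase f a) (𝓝[>] a) (𝓝 0) := by
  have h : ContinuousAt (wkbPhase f a) a :=
    (eventually_hasDerivAt_wkbPhase hf).self_of_nhds.continuousAt
  have ha : wkbPhase f a a = 0 := intervalIntegral.integral_same
  exact ha ▸ h.tendsto.mono_left nhdsWithin_le_nhds

lemma tendsto_wkbPhase_div_sub_rpow {γ : ℝ} (hf : ∀ᶠ z in 𝓝 a, ContinuousAt f z)
    (hslope : Tendsto (fun z => f z / (z - a)) (𝓝[>] a) (𝓝 γ)) :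
    Tendsto (fun z => wkbPhase f a z / (z - a) ^ (3 / 2 : ℝ)) (𝓝[>] a) (𝓝 (2 / 3 * √γ)) := by
  have hsqrt : Tendsto (fun z => √(f z) / (z - a) ^ (3 / 2 - 1 : ℝ)) (𝓝[>] a) (𝓝 √γ) := by
    refine hslope.sqrt.congr' ?_
    filter_upwards [eventually_sub_pos_nhdsGT a] with z hz
    rw [sqrt_div' _ hz.le, sqrt_eq_rpow (z - a)]
    norm_num only
  have h := tendsto_div_sub_rpow_of_hasDerivAt (by norm_num)
    ((eventually_hasDerivAt_wkbPhase hf).filter_mono nhdsWithin_le_nhds)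
    (tendsto_wkbPhase_zero hf) hsqrt
  rwa [div_div_eq_mul_div, mul_comm, mul_div_right_comm] at h

lemma hasDerivAt_wkbAmplitude {z f' : ℝ} (hφ : HasDerivAt (wkbPhase f a) (√(f z)) z)
    (hf : HasDerivAt f f' z) (hφpos : 0 < wkbPhase f a z) (hfpos : 0 < f z) :
    HasDerivAt (wkbAmplitude f a)
      (1 / 4 * (3 * wkbPhase f a z / 2) ^ (-5 / 6 : ℝ) * f z ^ (-5 / 4 : ℝ)
        * (f z ^ (3 / 2 : ℝ) - 3 * wkbPhase f a z / 2 * f')) z := by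
  have hPpos : 0 < 3 * wkbPhase f a z / 2 := by positivity
  have hP : HasDerivAt (fun y => 3 * wkbPhase f a y / 2) (3 * √(f z) / 2) z :=
    (hφ.const_mul 3).div_const 2
  refine ((hP.rpow_const (p := 1 / 6) (Or.inl hPpos.ne')).div
    (hf.rpow_const (p := 1 / 4) (Or.inl hfpos.ne')) (rpow_pos_of_pos hfpos _).ne').congr_deriv ?_
  generalize 3 * wkbPhase f a z / 2 = P at hPpos ⊢
  generalize f z = F at hfpos ⊢
  have hP16 : P ^ (1 / 6 : ℝ) = P ^ (-5 / 6 : ℝ) * P := by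
    rw [← rpow_add_one hPpos.ne']; norm_num
  have hF12 : √F = (F ^ (1 / 4 : ℝ)) ^ 2 := by
    rw [sqrt_eq_rpow, ← rpow_mul_natCast hfpos.le]; norm_num
  have hF14 : F ^ (1 / 4 : ℝ) = F ^ (-5 / 4 : ℝ) * F ^ (3 / 2 : ℝ) := by
    rw [← rpow_add hfpos]; norm_num
  have hF34 : F ^ (1 / 4 - 1 : ℝ) = F ^ (-5 / 4 : ℝ) * (F ^ (1 / 4 : ℝ)) ^ 2 := by
    rw [← rpow_mul_natCast hfpos.le, ← rpow_add hfpos]; norm_num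
  have hF : F ^ (1 / 4 : ℝ) ≠ 0 := (rpow_pos_of_pos hfpos _).ne'
  calc _ = 1 / 4 * (P ^ (-5 / 6 : ℝ) * F ^ (1 / 4 : ℝ)
        - P ^ (1 / 6 : ℝ) * F ^ (-5 / 4 : ℝ) * f') := by
        rw [hF12, hF34, show (1 / 6 - 1 : ℝ) = -5 / 6 by norm_num]
        field_simp
        ring
    _ = _ := by
        rw [hP16, hF14]
        ring

lemma hasDerivAt_rpow_sub_wkbPhase_mul_deriv {z : ℝ}
    (hφ : HasDerivAt (wkbPhase f a) (√(f z)) z) (hf : DifferentiableAt ℝ f z)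
    (hf' : DifferentiableAt ℝ (deriv f) z) :
    HasDerivAt (fun y => f y ^ (3 / 2 : ℝ) - 3 * wkbPhase f a y / 2 * deriv f y)
      (-(3 * wkbPhase f a z / 2 * deriv (deriv f) z)) z := by
  refine ((hf.hasDerivAt.rpow_const (p := 3 / 2) (Or.inr (by norm_num))).sub
    (((hφ.const_mul 3).div_const 2).mul hf'.hasDerivAt)).congr_deriv ?_
  rw [show (3 / 2 - 1 : ℝ) = 1 / 2 by norm_num, sqrt_eq_rpow]
  ring

lemma tendsto_rpow_sub_wkbPhase_mul_deriv (hf : ContDiffAt ℝ 2 f a) (hfa : f a = 0) :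
    Tendsto (fun z => (f z ^ (3 / 2 : ℝ) - 3 * wkbPhase f a z / 2 * deriv f z)
      / (z - a) ^ (5 / 2 : ℝ)) (𝓝[>] a) (𝓝 (-(2 / 5 * √(deriv f a) * deriv (deriv f) a))) := by
  have hf1 : ContDiffAt ℝ 1 (deriv f) a := hf.derivWithin (by norm_num)
  have hf2 : ContDiffAt ℝ 0 (deriv (deriv f)) a := hf1.derivWithin (by norm_num)
  have hfev : ∀ᶠ z in 𝓝 a, DifferentiableAt ℝ f z :=
    eventually_differentiableAt_of_contDiffAt (hf.of_le one_le_two)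
  have hf1ev : ∀ᶠ z in 𝓝 a, DifferentiableAt ℝ (deriv f) z :=
    eventually_differentiableAt_of_contDiffAt hf1
  have hfcont : ∀ᶠ z in 𝓝 a, ContinuousAt f z := hfev.mono fun z hz => hz.continuousAt
  have hderiv := (eventually_hasDerivAt_wkbPhase hfcont).and (hfev.and hf1ev)
  have hzero : Tendsto (fun z => f z ^ (3 / 2 : ℝ) - 3 * wkbPhase f a z / 2 * deriv f z)
      (𝓝[>] a) (𝓝 0) := by
    have hf0 : Tendsto f (𝓝[>] a) (𝓝 0) := hfa ▸ hf.continuousAt.mono_left nhdsWithin_le_nhds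
    have hf1lim := hf1.continuousAt.tendsto.mono_left (nhdsWithin_le_nhds (s := Set.Ioi a))
    simpa using (tendsto_rpow_nhds_zero (p := 3 / 2) (by norm_num) hf0).sub
      ((((tendsto_wkbPhase_zero hfcont).const_mul 3).div_const 2).mul hf1lim)
  have hslope := tendsto_div_sub_nhdsGT hfev.self_of_nhds.hasDerivAt hfa
  have hquot : Tendsto (fun z => -(3 * wkbPhase f a z / 2 * deriv (deriv f) z)
      / (z - a) ^ (5 / 2 - 1 : ℝ)) (𝓝[>] a) (𝓝 (-(√(deriv f a) * deriv (deriv f) a))) := by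
    convert (((tendsto_wkbPhase_div_sub_rpow hfcont hslope).const_mul (3 / 2)).mul
      (hf2.continuousAt.tendsto.mono_left nhdsWithin_le_nhds)).neg using 2
    · rw [show (5 / 2 - 1 : ℝ) = 3 / 2 by norm_num]
      ring
    · ring
  have h := tendsto_div_sub_rpow_of_hasDerivAt (by norm_num)
    ((hderiv.mono fun z ⟨hφz, hfz, hf1z⟩ =>
      hasDerivAt_rpow_sub_wkbPhase_mul_deriv hφz hfz hf1z).filter_mono nhdsWithin_le_nhds)
    hzero hquot
  convert h using 2
  ring

lemma rpow_mul_rpow_mul_eq_rescaled {P F s : ℝ} (hP : 0 ≤ P) (hF : 0 ≤ F) (hs : 0 < s) (N : ℝ) :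
    P ^ (-5 / 6 : ℝ) * F ^ (-5 / 4 : ℝ) * N
      = (P / s ^ (3 / 2 : ℝ)) ^ (-5 / 6 : ℝ) * (F / s) ^ (-5 / 4 : ℝ) * (N / s ^ (5 / 2 : ℝ)) := by
  have hs5 : s ^ (5 / 2 : ℝ) = (s ^ (5 / 4 : ℝ)) ^ 2 := by
    rw [← rpow_mul_natCast hs.le]; norm_num
  have hs32 : (s ^ (3 / 2 : ℝ)) ^ (-5 / 6 : ℝ) = (s ^ (5 / 4 : ℝ))⁻¹ := by
    rw [← rpow_mul hs.le, ← rpow_neg hs.le]; norm_num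
  have hs1 : s ^ (-5 / 4 : ℝ) = (s ^ (5 / 4 : ℝ))⁻¹ := by
    rw [← rpow_neg hs.le]; norm_num
  have hs0 : s ^ (5 / 4 : ℝ) ≠ 0 := (rpow_pos_of_pos hs _).ne'
  rw [div_rpow hP (rpow_nonneg hs.le _), div_rpow hF hs.le, hs5, hs32, hs1]
  field_simp

lemma eventually_deriv_wkbAmplitude_eq_rescaled (hf : ContDiffAt ℝ 1 f a) (hfa : f a = 0)
    (hf' : 0 < deriv f a) :
    ∀ᶠ z in 𝓝[>] a, deriv (wkbAmplitude f a) z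
      = 1 / 4 * ((3 * wkbPhase f a z / 2 / (z - a) ^ (3 / 2 : ℝ)) ^ (-5 / 6 : ℝ)
        * (f z / (z - a)) ^ (-5 / 4 : ℝ)
        * ((f z ^ (3 / 2 : ℝ) - 3 * wkbPhase f a z / 2 * deriv f z) / (z - a) ^ (5 / 2 : ℝ))) := by
  have hfev : ∀ᶠ z in 𝓝 a, DifferentiableAt ℝ f z := eventually_differentiableAt_of_contDiffAt hf
  have hfcont : ∀ᶠ z in 𝓝 a, ContinuousAt f z := hfev.mono fun z hz => hz.continuousAt
  have hpos := eventually_sub_pos_nhdsGT a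
  have hslope := tendsto_div_sub_nhdsGT hfev.self_of_nhds.hasDerivAt hfa
  have hfpos : ∀ᶠ z in 𝓝[>] a, 0 < f z := eventually_pos_of_tendsto_div hpos hslope hf'
  have hφpos : ∀ᶠ z in 𝓝[>] a, 0 < wkbPhase f a z :=
    eventually_pos_of_tendsto_div (hpos.mono fun z hz => rpow_pos_of_pos hz _)
      (tendsto_wkbPhase_div_sub_rpow hfcont hslope) (by positivity)
  filter_upwards [hpos, (eventually_hasDerivAt_wkbPhase hfcont).filter_mono nhdsWithin_le_nhds,
    hfev.filter_mono nhdsWithin_le_nhds, hφpos, hfpos] with z hz hφz hfz hφz0 hfz0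
  rw [(hasDerivAt_wkbAmplitude hφz hfz.hasDerivAt hφz0 hfz0).deriv, mul_assoc (1 / 4),
    mul_assoc (1 / 4), rpow_mul_rpow_mul_eq_rescaled (by positivity) hfz0.le hz]

lemma sqrt_rpow_mul_rpow_mul_sqrt {γ : ℝ} (hγ : 0 < γ) :
    √γ ^ (-5 / 6 : ℝ) * γ ^ (-5 / 4 : ℝ) * √γ = (γ ^ (7 / 6 : ℝ))⁻¹ := by
  rw [sqrt_eq_rpow, ← rpow_mul hγ.le, ← rpow_add hγ, ← rpow_add hγ, ← rpow_neg hγ.le]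
  norm_num

theorem tendsto_deriv_wkbAmplitude (hf : ContDiffAt ℝ 2 f a) (hfa : f a = 0)
    (hf' : 0 < deriv f a) :
    Tendsto (deriv (wkbAmplitude f a)) (𝓝[>] a)
      (𝓝 (-deriv (deriv f) a / (10 * deriv f a ^ (7 / 6 : ℝ)))) := by
  have hf1 : ContDiffAt ℝ 1 f a := hf.of_le one_le_two
  have hfev : ∀ᶠ z in 𝓝 a, DifferentiableAt ℝ f z := eventually_differentiableAt_of_contDiffAt hf1
  have hslope := tendsto_div_sub_nhdsGT hfev.self_of_nhds.hasDerivAt hfa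
  have hP : Tendsto (fun z => 3 * wkbPhase f a z / 2 / (z - a) ^ (3 / 2 : ℝ)) (𝓝[>] a)
      (𝓝 √(deriv f a)) := by
    convert (tendsto_wkbPhase_div_sub_rpow (hfev.mono fun z hz => hz.continuousAt)
      hslope).const_mul (3 / 2) using 2 <;> ring
  have hlim := (((hP.rpow_const (p := -5 / 6) (Or.inl (sqrt_pos.2 hf').ne')).mul
    (hslope.rpow_const (p := -5 / 4) (Or.inl hf'.ne'))).mul
    (tendsto_rpow_sub_wkbPhase_mul_deriv hf hfa)).const_mul (1 / 4)
  have hvalue : 1 / 4 * (√(deriv f a) ^ (-5 / 6 : ℝ) * deriv f a ^ (-5 / 4 : ℝ)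
      * -(2 / 5 * √(deriv f a) * deriv (deriv f) a))
      = -deriv (deriv f) a / (10 * deriv f a ^ (7 / 6 : ℝ)) := by
    rw [div_eq_mul_inv _ (10 * _), mul_inv, ← sqrt_rpow_mul_rpow_mul_sqrt hf']
    ring
  rw [hvalue] at hlim
  exact hlim.congr' ((eventually_deriv_wkbAmplitude_eq_rescaled hf1 hfa hf').mono
    fun _ h => h.symm)

end TurningPoint

theorem wkb_amplitude_derivative_limit_at_turning_point_general
    {k zT : ℝ} {μ φ Q : ℝ → ℝ} (hμT : μ zT ^ 2 = k ^ 2)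
    (hφ : ∀ᶠ z in 𝓝[>] zT, φ z = ∫ z' in zT..z, √(k ^ 2 - μ z' ^ 2))
    (hQ : ∀ᶠ z in 𝓝[>] zT,
      Q z = (3 * φ z / 2) ^ (1 / 6 : ℝ) / (k ^ 2 - μ z ^ 2) ^ (1 / 4 : ℝ))
    (hμ2 : ContDiffAt ℝ 2 (fun z => μ z ^ 2) zT)
    {γ θ : ℝ} (hγ : γ = -deriv (fun z => μ z ^ 2) zT) (hγpos : 0 < γ)
    (hθ : θ = 1 / 2 * deriv (deriv fun z => μ z ^ 2) zT) :
    Tendsto (deriv Q) (𝓝[>] zT) (𝓝 (θ / (5 * γ ^ (7 / 6 : ℝ)))) := by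
  set f : ℝ → ℝ := fun z => k ^ 2 - μ z ^ 2
  have hderiv : deriv f = fun z => -deriv (fun y => μ y ^ 2) z := funext fun z => deriv_const_sub _
  have hf' : deriv f zT = γ := by rw [hderiv, hγ]
  have hf'' : deriv (deriv f) zT = -(2 * θ) := by
    rw [hderiv, deriv.fun_neg, hθ]
    ring
  have hlim := tendsto_deriv_wkbAmplitude (contDiffAt_const.sub hμ2 : ContDiffAt ℝ 2 f zT)
    (sub_eq_zero.2 hμT.symm) (hf' ▸ hγpos)
  have hvalue : -deriv (deriv f) zT / (10 * deriv f zT ^ (7 / 6 : ℝ))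
      = θ / (5 * γ ^ (7 / 6 : ℝ)) := by
    rw [hf', hf'', neg_neg, show (10 : ℝ) = 2 * 5 by norm_num, mul_assoc,
      mul_div_mul_left _ _ two_ne_zero]
  rw [hvalue] at hlim
  have hQeq : ∀ᶠ z in 𝓝[>] zT, Q z = wkbAmplitude f zT z := by
    filter_upwards [hφ, hQ] with z hφz hQz
    rw [hQz, hφz, wkbAmplitude, wkbPhase]
  refine hlim.congr' ?_
  filter_upwards [eventually_eventually_nhdsWithin.2 hQeq, eventually_mem_nhdsWithin] with z hz hzT
  rw [isOpen_Ioi.nhdsWithin_eq hzT] at hz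
  exact EventuallyEq.deriv_eq (hz.mono fun _ h => h.symm)

/-- at a simple turning point with `γ = −(μ²)'(z_T) > 0` and
`θ = (1/2)(μ²)''(z_T)`, the derivative of the WKB amplitude factor `Q` extends
continuously to the turning point with limit `θ/(5γ^{7/6})`. -/
theorem wkb_amplitude_derivative_limit_at_turning_point
    (k zT : ℝ) (hk : 0 < k) (hzT : zT < 0)
    (μ : ℝ → ℝ) (hμc : ContinuousOn μ (Set.Icc zT 0))
    (hμT : μ zT = k) (hμlt : ∀ z ∈ Set.Ioc zT 0, μ z < k)
    (φ Q : ℝ → ℝ)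
    (hφ : ∀ z, φ z = ∫ z' in zT..z, Real.sqrt (k ^ 2 - μ z' ^ 2))
    (hQ : ∀ z ∈ Set.Ioc zT 0,
      Q z = (3 * φ z / 2) ^ ((1 : ℝ) / 6) / (k ^ 2 - μ z ^ 2) ^ ((1 : ℝ) / 4))
    (hμ2 : ContDiffAt ℝ 2 (fun z => μ z ^ 2) zT)
    (γ θ : ℝ) (hγ : γ = -deriv (fun z => μ z ^ 2) zT) (hγpos : 0 < γ)
    (hθ : θ = (1 / 2) * deriv (deriv (fun z => μ z ^ 2)) zT) :
    Tendsto (deriv Q) (nhdsWithin zT (Set.Ioi zT))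
      (nhds (θ / (5 * γ ^ ((7 : ℝ) / 6)))) :=
  wkb_amplitude_derivative_limit_at_turning_point_general (by rw [hμT]) (.of_forall hφ)
    (mem_of_superset (Ioc_mem_nhdsGT hzT) hQ) hμ2 hγ hγpos hθ
end

section
/- Let J ⊂ (0, ∞) be an open interval, let z₁ < 0, and let μ : [z₁, 0] → ℝ be continuously differentiable and strictly decreasing with μ'(z) < 0 for all z. Assume that for every ω ∈ J there exists z_T(ω) ∈ (z₁, 0) with μ(z_T(ω)) = ω, so that μ(z) < ω for z ∈ (z_T(ω), 0]. Then the function ω ↦ φ_ω(0) := ∫_{z_T(ω)}^0 √(ω² − μ(z)²) dz is differentiable on J, the improper integral ∫_{z_T(ω)}^0 ω / √(ω² − μ(z)²) dz converges, and (d/dω) φ_ω(0) = ∫_{z_T(ω)}^0 ω / √(ω² − μ(z)²) dz for every ω ∈ J. -/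
open MeasureTheory Real

open scoped Topology

/-!
Left of the turning point the radicand `ω² - μ²` is nonpositive, so `Real.sqrt` kills it and the
phase is an integral over a fixed interval: the moving singular endpoint disappears. For the fixed
interval, `|√a - √b| √|b| ≤ |a - b|` dominates the difference quotients in `ω²` by
`1 / √|ω² - μ²|`, which is integrable because the zeros of `ω² - μ²` are simple, and one may
differentiate under the integral sign.
-/

lemma abs_sqrt_sub_sqrt_mul_sqrt_abs_le (a b : ℝ) : |√a - √b| * √|b| ≤ |a - b| := by
  rcases le_total b 0 with hb | hb
  · rw [sqrt_eq_zero_of_nonpos hb, sub_zero, abs_of_nonneg (sqrt_nonneg a), abs_of_nonpos hb]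
    rcases le_total a 0 with ha | ha
    · simp [sqrt_eq_zero_of_nonpos ha]
    · rw [abs_of_nonneg (by linarith)]
      nlinarith [sq_sqrt ha, sq_sqrt (neg_nonneg.2 hb), sq_nonneg (√a - √(-b))]
  · rw [abs_of_nonneg hb]
    rcases le_total a 0 with ha | ha
    · rw [sqrt_eq_zero_of_nonpos ha, zero_sub, abs_neg, abs_of_nonneg (sqrt_nonneg b),
        mul_self_sqrt hb, abs_of_nonpos (by linarith)]
      linarith
    · calc |√a - √b| * √b ≤ |√a - √b| * (√a + √b) := by
            gcongr
            exact le_add_of_nonneg_left (sqrt_nonneg a)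
        _ = |(√a - √b) * (√a + √b)| := by
            rw [abs_mul, abs_of_nonneg (add_nonneg (sqrt_nonneg a) (sqrt_nonneg b))]
        _ = |a - b| := by
            congr 1
            linear_combination sq_sqrt ha - sq_sqrt hb

section ParametricIntegral

variable {α : Type*} [MeasurableSpace α] {ν : Measure α}

-- Unlike in `hasDerivAt_integral_of_dominated_loc_of_lip`, only increments from `x₀` are dominated.
lemma hasDerivAt_integral_of_dominated_increment {𝕜 E : Type*} [RCLike 𝕜] [NormedAddCommGroup E]
    [NormedSpace ℝ E] [NormedSpace 𝕜 E] [CompleteSpace E] {F : 𝕜 → α → E} {F' : α → E}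
    {bound : α → ℝ} {x₀ : 𝕜} {s : Set 𝕜} (hs : s ∈ 𝓝 x₀)
    (hF_meas : ∀ x ∈ s, AEStronglyMeasurable (F x) ν) (hF_int : Integrable (F x₀) ν)
    (hF'_meas : AEStronglyMeasurable F' ν)
    (h_incr : ∀ᵐ a ∂ν, ∀ x ∈ s, ‖F x a - F x₀ a‖ ≤ bound a * ‖x - x₀‖)
    (bound_integrable : Integrable bound ν)
    (h_diff : ∀ᵐ a ∂ν, HasDerivAt (F · a) (F' a) x₀) :
    Integrable F' ν ∧ HasDerivAt (fun x => ∫ a, F x a ∂ν) (∫ a, F' a ∂ν) x₀ := by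
  let L : E →L[𝕜] 𝕜 →L[𝕜] E := ContinuousLinearMap.smulRightL 𝕜 𝕜 E 1
  have hL_meas : AEStronglyMeasurable (L ∘ F') ν := L.continuous.comp_aestronglyMeasurable hF'_meas
  obtain ⟨hL_int, hderiv⟩ := hasFDerivAt_integral_of_dominated_loc_of_lip'
    hs hF_meas hF_int hL_meas h_incr bound_integrable (h_diff.mono fun a ha => ha.hasFDerivAt)
  have hF'_int : Integrable F' ν := by
    rw [← integrable_norm_iff hL_meas] at hL_int
    exact (integrable_norm_iff hF'_meas).1 (by simpa [L, (· ∘ ·)] using! hL_int)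
  refine ⟨hF'_int, ?_⟩
  rw [hasDerivAt_iff_hasFDerivAt]
  simpa only [(· ∘ ·), ContinuousLinearMap.integral_comp_comm _ hF'_int] using! hderiv

variable {g : α → ℝ} {x : ℝ}

lemma hasDerivAt_integral_sqrt_sub (hg : AEMeasurable g ν)
    (hint : Integrable (fun a => √(x - g a)) ν)
    (hinv : Integrable (fun a => (√|x - g a|)⁻¹) ν) (hne : ∀ᵐ a ∂ν, x - g a ≠ 0) :
    Integrable (fun a => 1 / (2 * √(x - g a))) ν ∧
      HasDerivAt (fun y => ∫ a, √(y - g a) ∂ν) (∫ a, 1 / (2 * √(x - g a)) ∂ν) x := by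
  refine hasDerivAt_integral_of_dominated_increment Filter.univ_mem (fun y _ => by fun_prop) hint
    (AEMeasurable.aestronglyMeasurable (by fun_prop)) ?_ hinv ?_
  · filter_upwards [hne] with a ha y _
    rw [norm_eq_abs, norm_eq_abs, inv_mul_eq_div,
      le_div_iff₀ (sqrt_pos.2 (abs_pos.2 ha)), ← sub_sub_sub_cancel_right y x (g a)]
    exact abs_sqrt_sub_sqrt_mul_sqrt_abs_le _ _
  · filter_upwards [hne] with a ha
    exact ((hasDerivAt_id x).sub_const (g a)).sqrt ha

lemma hasDerivAt_integral_sqrt_sq_sub (hg : AEMeasurable g ν)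
    (hint : Integrable (fun a => √(x ^ 2 - g a)) ν)
    (hinv : Integrable (fun a => (√|x ^ 2 - g a|)⁻¹) ν) (hne : ∀ᵐ a ∂ν, x ^ 2 - g a ≠ 0) :
    Integrable (fun a => x / √(x ^ 2 - g a)) ν ∧
      HasDerivAt (fun y => ∫ a, √(y ^ 2 - g a) ∂ν) (∫ a, x / √(x ^ 2 - g a) ∂ν) x := by
  obtain ⟨hint', hderiv⟩ := hasDerivAt_integral_sqrt_sub hg hint hinv hne
  have hchain (a : α) : x / √(x ^ 2 - g a) = 1 / (2 * √(x ^ 2 - g a)) * (2 * x) := by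
    rw [one_div_mul_eq_div, mul_div_mul_left _ _ two_ne_zero]
  simp only [hchain, integral_mul_const]
  exact ⟨hint'.mul_const _, hderiv.comp (h := (· ^ 2)) x (by simpa using hasDerivAt_pow 2 x)⟩

end ParametricIntegral

lemma locallyIntegrable_abs_sub_rpow {r : ℝ} (hr : -1 < r) (p : ℝ) :
    LocallyIntegrable fun x : ℝ => |x - p| ^ r := by
  have hpos (x : ℝ) (hx : 0 < x) : IntervalIntegrable (fun y : ℝ => |y| ^ r) volume 0 x :=
    (intervalIntegral.intervalIntegrable_rpow' hr).congr fun y hy => by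
      rw [Set.uIoc_of_le hx.le] at hy
      simp only [abs_of_pos hy.1]
  intro x
  have hint : IntervalIntegrable (fun y : ℝ => |y - p| ^ r) volume (x - 1) (x + 1) := by
    simpa using (intervalIntegrable_of_even (a := x - 1 - p) (b := x + 1 - p)
      (fun y => by rw [abs_neg]) hpos).comp_sub_right p
  rw [intervalIntegrable_iff_integrableOn_Ioc_of_le (by linarith)] at hint
  exact ⟨_, Ioc_mem_nhds (by linarith) (by linarith), hint⟩

section SimpleZeros

variable {f : ℝ → ℝ} {s : Set ℝ}

-- A nonzero `derivWithin` entails differentiability, since its junk value is `0`.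
lemma isTheta_abs_rpow_of_derivWithin_ne_zero {x : ℝ} (r : ℝ) (hfx : f x = 0)
    (hf' : derivWithin f s x ≠ 0) :
    (fun z => |f z| ^ r) =Θ[𝓝[s] x] fun z => |z - x| ^ r := by
  have hderiv := (differentiableWithinAt_of_derivWithin_ne_zero hf').hasDerivWithinAt
  have hpair : Filter.Tendsto (fun z => (z, x)) (𝓝[s] x) (𝓝[s] x ×ˢ pure x) :=
    Filter.tendsto_id.prodMk (Filter.tendsto_pure.2 (.of_forall fun _ => rfl))
  obtain ⟨hle, hge⟩ := hderiv.isTheta_sub hf'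
  have hsub : f =Θ[𝓝[s] x] fun z => z - x :=
    ⟨by simpa [Function.comp_def, hfx] using hle.comp_tendsto hpair,
      by simpa [Function.comp_def, hfx] using hge.comp_tendsto hpair⟩
  have habs_nonneg (g : ℝ → ℝ) : 0 ≤ᶠ[𝓝[s] x] fun z => |g z| := .of_forall fun z => abs_nonneg (g z)
  exact hsub.norm_left.norm_right.rpow (habs_nonneg f) (habs_nonneg (· - x))

lemma integrableOn_abs_rpow_of_simple_zeros (hs : IsCompact s) (hf : ContinuousOn f s)
    (hf' : ∀ x ∈ s, f x = 0 → derivWithin f s x ≠ 0) {r : ℝ} (hr : -1 < r) :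
    IntegrableOn (fun x => |f x| ^ r) s := by
  have hmeas : AEMeasurable f (volume.restrict s) := hf.aemeasurable hs.measurableSet
  refine LocallyIntegrableOn.integrableOn_isCompact (fun x hx => ?_) hs
  have hmeas' : StronglyMeasurableAtFilter (fun z => |f z| ^ r) (𝓝[s] x) :=
    ⟨s, self_mem_nhdsWithin, AEMeasurable.aestronglyMeasurable (by fun_prop)⟩
  have : (𝓝[s] x).IsMeasurablyGenerated := hs.measurableSet.nhdsWithin_isMeasurablyGenerated x
  by_cases hfx : f x = 0
  · exact (isTheta_abs_rpow_of_derivWithin_ne_zero r hfx (hf' x hx hfx)).1.integrableAtFilter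
      hmeas' ((locallyIntegrable_abs_sub_rpow hr x).locallyIntegrableOn s x hx)
  · have hcont : ContinuousWithinAt (fun z => |f z| ^ r) s x :=
      (hf x hx).abs.rpow_const (.inl (abs_ne_zero.2 hfx))
    exact (volume.finiteAt_nhdsWithin x s).integrableAtFilter_of_tendsto hmeas' hcont

lemma ae_restrict_ne_zero_of_simple_zeros {ν : Measure ℝ} [NullSingletonClass ν]
    (hs : MeasurableSet s) (hf' : ∀ x ∈ s, f x = 0 → derivWithin f s x ≠ 0) :
    ∀ᵐ x ∂ν.restrict s, f x ≠ 0 := by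
  have hnull : ν {x | x ∈ s ∧ f x = 0} = 0 := by
    refine measure_null_of_locally_null _ fun x ⟨hxs, hfx⟩ => ⟨{x}, ?_, measure_singleton x⟩
    have hderiv := (differentiableWithinAt_of_derivWithin_ne_zero (hf' x hxs hfx)).hasDerivWithinAt
    have hne := eventually_nhdsWithin_iff.1 (hderiv.eventually_ne (c := 0) (hf' x hxs hfx))
    filter_upwards [nhdsWithin_le_nhds hne, self_mem_nhdsWithin] with z hz ⟨hzs, hfz⟩
    by_contra hzx
    exact hz ⟨hzs, hzx⟩ hfz
  rw [ae_restrict_iff' hs, ae_iff]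
  simpa only [ne_eq, Classical.not_imp, not_not] using hnull

end SimpleZeros

lemma intervalIntegral_eq_setIntegral_of_eq_zero {E : Type*} [NormedAddCommGroup E]
    [NormedSpace ℝ E] {g : ℝ → E} {a b c : ℝ} (hc : c ∈ Set.Icc a b)
    (hg : ∀ z ∈ Set.Ioc a c, g z = 0) :
    ∫ z in c..b, g z = ∫ z in Set.Icc a b, g z := by
  rw [intervalIntegral.integral_of_le hc.2, integral_Icc_eq_integral_Ioc]
  refine (setIntegral_eq_of_subset_of_forall_sdiff_eq_zero measurableSet_Ioc
    (Set.Ioc_subset_Ioc_left hc.1) fun z hz => hg z ⟨hz.1.1, ?_⟩).symm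
  by_contra! h
  exact hz.2 ⟨h, hz.1.2⟩

section TurningPoint

variable {μ : ℝ → ℝ} {ω : ℝ}

lemma sqrt_sq_sub_sq_eq_zero_of_le_turning_point {s : Set ℝ} {c z : ℝ}
    (hμ : AntitoneOn μ s) (hc : c ∈ s) (hz : z ∈ s) (hzc : z ≤ c) (hμc : 0 ≤ μ c) :
    √(μ c ^ 2 - μ z ^ 2) = 0 := by
  have hle : μ c ≤ μ z := hμ hz hc hzc
  exact sqrt_eq_zero_of_nonpos (sub_nonpos.2 (by gcongr))

lemma derivWithin_sq_sub_sq_ne_zero {s : Set ℝ} {z : ℝ} (hμz : μ z ≠ 0)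
    (hμ' : derivWithin μ s z ≠ 0) : derivWithin (fun y => ω ^ 2 - μ y ^ 2) s z ≠ 0 := by
  rw [derivWithin_const_sub,
    derivWithin_fun_pow (differentiableWithinAt_of_derivWithin_ne_zero hμ')]
  simp [hμz, hμ']

lemma hasDerivAt_setIntegral_sqrt_sq_sub_sq {s : Set ℝ} (hs : IsCompact s) (hω : ω ≠ 0)
    (hμ : ContinuousOn μ s) (hμ' : ∀ z ∈ s, μ z ^ 2 = ω ^ 2 → derivWithin μ s z ≠ 0) :
    IntegrableOn (fun z => ω / √(ω ^ 2 - μ z ^ 2)) s ∧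
      HasDerivAt (fun w => ∫ z in s, √(w ^ 2 - μ z ^ 2)) (∫ z in s, ω / √(ω ^ 2 - μ z ^ 2)) ω := by
  have hcont : ContinuousOn (fun z => ω ^ 2 - μ z ^ 2) s := by fun_prop
  have hsimple : ∀ z ∈ s, ω ^ 2 - μ z ^ 2 = 0 → derivWithin (fun y => ω ^ 2 - μ y ^ 2) s z ≠ 0 :=
    fun z hz h => have hμz := (sub_eq_zero.1 h).symm
      derivWithin_sq_sub_sq_ne_zero (pow_ne_zero_iff two_ne_zero |>.1 <|
        hμz ▸ pow_ne_zero 2 hω) (hμ' z hz hμz)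
  have hinv : IntegrableOn (fun z => (√|ω ^ 2 - μ z ^ 2|)⁻¹) s := by
    simpa only [sqrt_eq_rpow, rpow_neg (abs_nonneg _)] using
      integrableOn_abs_rpow_of_simple_zeros hs hcont hsimple (r := -(1 / 2)) (by norm_num)
  exact hasDerivAt_integral_sqrt_sq_sub ((hμ.pow 2).aemeasurable hs.measurableSet)
    (hcont.sqrt.integrableOn_compact hs) hinv
    (ae_restrict_ne_zero_of_simple_zeros hs.measurableSet hsimple)

theorem wkb_phase_frequency_derivative_general {a b : ℝ} {zT : ℝ → ℝ} (hω : 0 < ω)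
    (hμ : ContinuousOn μ (Set.Icc a b)) (hμanti : AntitoneOn μ (Set.Icc a b))
    (hμ' : ∀ z ∈ Set.Icc a b, μ z ^ 2 = ω ^ 2 → derivWithin μ (Set.Icc a b) z ≠ 0)
    (hzT : ∀ᶠ w in 𝓝 ω, zT w ∈ Set.Icc a b ∧ μ (zT w) = w) :
    IntegrableOn (fun z => ω / √(ω ^ 2 - μ z ^ 2)) (Set.Ioc (zT ω) b) ∧
      HasDerivAt (fun w => ∫ z in (zT w)..b, √(w ^ 2 - μ z ^ 2))
        (∫ z in (zT ω)..b, ω / √(ω ^ 2 - μ z ^ 2)) ω := by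
  obtain ⟨hint, hderiv⟩ := hasDerivAt_setIntegral_sqrt_sq_sub_sq isCompact_Icc hω.ne' hμ hμ'
  have hvanish {w : ℝ} (hw : 0 < w) (h : zT w ∈ Set.Icc a b ∧ μ (zT w) = w) :
      ∀ z ∈ Set.Ioc a (zT w), √(w ^ 2 - μ z ^ 2) = 0 := fun z hz => by
    simpa only [h.2] using sqrt_sq_sub_sq_eq_zero_of_le_turning_point hμanti h.1
      ⟨hz.1.le, hz.2.trans h.1.2⟩ hz.2 (h.2.symm ▸ hw.le)
  have hzTω := hzT.self_of_nhds
  refine ⟨hint.mono_set ((Set.Ioc_subset_Ioc_left hzTω.1.1).trans Set.Ioc_subset_Icc_self), ?_⟩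
  rw [intervalIntegral_eq_setIntegral_of_eq_zero hzTω.1
    fun z hz => by rw [hvanish hω hzTω z hz, div_zero]]
  refine hderiv.congr_of_eventuallyEq ?_
  filter_upwards [hzT, lt_mem_nhds hω] with w hw hw0
  exact intervalIntegral_eq_setIntegral_of_eq_zero hw.1 (hvanish hw0 hw)

end TurningPoint

/-- the WKB phase `φ_ω(0) = ∫_{z_T(ω)}^0 √(ω² − μ(z)²) dz` is differentiable
in the frequency `ω`, the improper integral `∫_{z_T(ω)}^0 ω/√(ω² − μ(z)²) dz` converges,
and the derivative of the phase equals that integral (half the round-trip travel time). -/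
theorem wkb_phase_frequency_derivative
    (ω₁ ω₂ : ℝ) (hω₁ : 0 < ω₁) (hJ : ω₁ < ω₂)
    (z₁ : ℝ) (hz₁ : z₁ < 0)
    (μ μ' : ℝ → ℝ)
    (hμ : ∀ z ∈ Set.Icc z₁ 0, HasDerivAt μ (μ' z) z)
    (hμ'c : ContinuousOn μ' (Set.Icc z₁ 0))
    (hμ'neg : ∀ z ∈ Set.Icc z₁ 0, μ' z < 0)
    (hμanti : StrictAntiOn μ (Set.Icc z₁ 0))
    (zT : ℝ → ℝ)
    (hzT : ∀ ω ∈ Set.Ioo ω₁ ω₂, zT ω ∈ Set.Ioo z₁ 0 ∧ μ (zT ω) = ω ∧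
      ∀ z ∈ Set.Ioc (zT ω) 0, μ z < ω) :
    ∀ ω ∈ Set.Ioo ω₁ ω₂,
      IntegrableOn (fun z => ω / Real.sqrt (ω ^ 2 - μ z ^ 2)) (Set.Ioc (zT ω) 0) ∧
      HasDerivAt (fun ω' => ∫ z in (zT ω')..0, Real.sqrt (ω' ^ 2 - μ z ^ 2))
        (∫ z in (zT ω)..0, ω / Real.sqrt (ω ^ 2 - μ z ^ 2)) ω :=
  fun _ hω => wkb_phase_frequency_derivative_general (hω₁.trans hω.1)
    (fun z hz => (hμ z hz).continuousAt.continuousWithinAt) hμanti.antitoneOn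
    (fun z hz _ => (hμ z hz).hasDerivWithinAt.derivWithin (uniqueDiffOn_Icc hz₁ z hz) ▸
      (hμ'neg z hz).ne)
    (Filter.eventually_of_mem (Ioo_mem_nhds hω.1 hω.2) fun w hw =>
      ⟨Set.Ioo_subset_Icc_self (hzT w hw).1, (hzT w hw).2.1⟩)
end
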